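/- Let p be a prime and let C and E be bounded, rationally acyclic cochain complexes of finitely generated free abelian groups, each with a chain automorphism σ satisfying σ^p = id, and suppose there exist σ-commuting chain maps f : C → E and g : E → C that are mutually inverse up to σ-commuting chain homotopies. Then the naive equivariant Reidemeister torsions agree: Σ_i (−1)^i [ (p−1)·log|H^i(C^{σ−1})| − log|H^i(C^{P(σ)})| + (p−1)·log|H^i(C')| ] = Σ_i (−1)^i [ (p−1)·log|H^i(E^{σ−1})| − log|H^i(E^{P(σ)})| + (p−1)·log|H^i(E')| ], where all the cohomology groups appearing are finite and |·| denotes cardinality. -/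

import Mathlib

open CategoryTheory CategoryTheory.Limits MonoidalCategory

/-- The complex `C ⊗ ℚ` obtained by tensoring a cochain complex of abelian groups with ℚ. -/
noncomputable def tensorQ (C : CochainComplex (ModuleCat ℤ) ℤ) :
    CochainComplex (ModuleCat ℤ) ℤ :=
  ((tensorRight (ModuleCat.of ℤ ℚ)).mapHomologicalComplex (ComplexShape.up ℤ)).obj C

/-- The cardinality of the `i`-th cohomology group of a cochain complex of abelian groups. -/
noncomputable def Hcard (i : ℤ) (X : CochainComplex (ModuleCat ℤ) ℤ) : ℕ :=
  Nat.card ((HomologicalComplex.homologyFunctor (ModuleCat ℤ) (ComplexShape.up ℤ) i).obj X)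

/-- The subcomplex `C^{σ−1}`, the degreewise kernel of `σ − 1`. -/
noncomputable def fixCx (C : CochainComplex (ModuleCat ℤ) ℤ) (σ : End C) :
    CochainComplex (ModuleCat ℤ) ℤ := kernel (σ - 1)

/-- The subcomplex `C^{P(σ)}`, the degreewise kernel of `P(σ) = 1 + σ + ⋯ + σ^{p−1}`. -/
noncomputable def cycCx (p : ℕ) (C : CochainComplex (ModuleCat ℤ) ℤ) (σ : End C) :
    CochainComplex (ModuleCat ℤ) ℤ := kernel (∑ k ∈ Finset.range p, σ ^ k)

/-- The quotient complex `C' = C / (C^{σ−1} ⊕ C^{P(σ)})`. -/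
noncomputable def quotCx (p : ℕ) (C : CochainComplex (ModuleCat ℤ) ℤ) (σ : End C) :
    CochainComplex (ModuleCat ℤ) ℤ :=
  cokernel (biprod.desc (kernel.ι (σ - 1)) (kernel.ι (∑ k ∈ Finset.range p, σ ^ k)))

/-- The naive equivariant Reidemeister torsion (multiplied by `p − 1`):
`Σ_i (−1)^i [ (p−1)·log|H^i(C^{σ−1})| − log|H^i(C^{P(σ)})| + (p−1)·log|H^i(C')| ]`. -/
noncomputable def nrt (p : ℕ) (C : CochainComplex (ModuleCat ℤ) ℤ) (σ : End C) : ℝ :=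
  ∑ᶠ i : ℤ, (-1 : ℝ) ^ i *
    (((p : ℝ) - 1) * Real.log (Hcard i (fixCx C σ))
      - Real.log (Hcard i (cycCx p C σ))
      + ((p : ℝ) - 1) * Real.log (Hcard i (quotCx p C σ)))


section helpers

abbrev Cx := CochainComplex (ModuleCat.{0} ℤ) ℤ

noncomputable def subHomotopy {K C : Cx} (ι : K ⟶ C) [∀ i, Mono (ι.f i)] (k : K ⟶ K)
    (u : C ⟶ C) (hk : k ≫ ι = ι ≫ u) (h : Homotopy u (𝟙 C))
    (h' : ∀ i j, K.X i ⟶ K.X j) (hh : ∀ i j, h' i j ≫ ι.f j = ι.f i ≫ h.hom i j) :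
    Homotopy k (𝟙 K) where
  hom := h'
  zero i j hij := by
    rw [← cancel_mono (ι.f j), hh, h.zero i j hij, comp_zero, zero_comp]
  comm i := by
    have r1 : (ComplexShape.up ℤ).Rel i (i + 1) := rfl
    have r2 : (ComplexShape.up ℤ).Rel (i - 1) i := by simp
    have e := h.comm i
    rw [dNext_eq _ r1, prevD_eq _ r2] at e
    have hk' : k.f i ≫ ι.f i = ι.f i ≫ u.f i := by
      rw [← HomologicalComplex.comp_f, hk, HomologicalComplex.comp_f]
    rw [← cancel_mono (ι.f i), dNext_eq _ r1, prevD_eq _ r2, hk', e]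
    simp only [Preadditive.add_comp, Preadditive.comp_add, Category.assoc, hh,
      HomologicalComplex.id_f, Category.id_comp, Category.comp_id]
    rw [← ι.comm (i - 1) i, ← Category.assoc (h' i (i - 1)), hh, Category.assoc,
      ← Category.assoc (ι.f i) (C.d _ _), ι.comm i (i + 1), Category.assoc]

noncomputable def quotHomotopy {Q C : Cx} (π : C ⟶ Q) [∀ i, Epi (π.f i)] (k : Q ⟶ Q)
    (u : C ⟶ C) (hk : π ≫ k = u ≫ π) (h : Homotopy u (𝟙 C))
    (h' : ∀ i j, Q.X i ⟶ Q.X j) (hh : ∀ i j, π.f i ≫ h' i j = h.hom i j ≫ π.f j) :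
    Homotopy k (𝟙 Q) where
  hom := h'
  zero i j hij := by
    rw [← cancel_epi (π.f i), hh, h.zero i j hij, comp_zero, zero_comp]
  comm i := by
    have r1 : (ComplexShape.up ℤ).Rel i (i + 1) := rfl
    have r2 : (ComplexShape.up ℤ).Rel (i - 1) i := by simp
    have e := h.comm i
    rw [dNext_eq _ r1, prevD_eq _ r2] at e
    have hk' : π.f i ≫ k.f i = u.f i ≫ π.f i := by
      rw [← HomologicalComplex.comp_f, hk, HomologicalComplex.comp_f]
    rw [← cancel_epi (π.f i), dNext_eq _ r1, prevD_eq _ r2, hk', e]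
    simp only [Preadditive.add_comp, Preadditive.comp_add, Category.assoc, ← hh,
      HomologicalComplex.id_f, Category.id_comp, Category.comp_id]
    rw [← π.comm (i - 1) i, ← Category.assoc (π.f i) (Q.d _ _), π.comm i (i + 1),
      Category.assoc, hh, ← Category.assoc (π.f i) (h' _ _), hh, Category.assoc]

def Cm {C : Cx} {i j : ℤ} (h : C.X i ⟶ C.X j) (φ : C ⟶ C) : Prop :=
  φ.f i ≫ h = h ≫ φ.f j

lemma Cm.one {C : Cx} {i j : ℤ} (h : C.X i ⟶ C.X j) : Cm h (1 : End C) := by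
  change (𝟙 C : C ⟶ C).f i ≫ h = h ≫ (𝟙 C : C ⟶ C).f j
  simp

lemma Cm.sub {C : Cx} {i j : ℤ} {h : C.X i ⟶ C.X j} {a b : C ⟶ C} (ha : Cm h a) (hb : Cm h b) :
    Cm h (a - b) := by
  unfold Cm at *
  simp [ha, hb]

lemma Cm.pow {C : Cx} {i j : ℤ} {h : C.X i ⟶ C.X j} {a : End C} (ha : Cm h a) (n : ℕ) :
    Cm h (a ^ n : End C) := by
  induction n with
  | zero => rw [pow_zero]; exact Cm.one h
  | succ n ih =>
    rw [pow_succ]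
    change ((a : C ⟶ C) ≫ (a ^ n : End C) : C ⟶ C).f i ≫ h = h ≫ ((a : C ⟶ C) ≫ (a ^ n : End C) : C ⟶ C).f j
    unfold Cm at *
    rw [HomologicalComplex.comp_f, HomologicalComplex.comp_f, Category.assoc, ih,
      ← Category.assoc, ha, Category.assoc]

lemma Cm.geom {C : Cx} {i j : ℤ} {h : C.X i ⟶ C.X j} {a : End C} (ha : Cm h a) (n : ℕ) :
    Cm h (∑ k ∈ Finset.range n, a ^ k : End C) := by
  induction n with
  | zero => 
    simp only [Finset.range_zero, Finset.sum_empty]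
    change (0 : C ⟶ C).f i ≫ h = h ≫ (0 : C ⟶ C).f j
    simp
  | succ n ih =>
    rw [Finset.sum_range_succ]
    have h2 := ha.pow n
    unfold Cm at *
    change (HAdd.hAdd (α := C ⟶ C) (β := C ⟶ C) (∑ k ∈ Finset.range n, a ^ k : End C) (a ^ n : End C)).f i ≫ h = h ≫ (HAdd.hAdd (α := C ⟶ C) (β := C ⟶ C) (∑ k ∈ Finset.range n, a ^ k : End C) (a ^ n : End C)).f j
    rw [HomologicalComplex.add_f_apply, HomologicalComplex.add_f_apply, Preadditive.add_comp,
      Preadditive.comp_add, ih, h2]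

lemma inter_pow {C E : Cx} (f : C ⟶ E) (a : End C) (b : End E) (h : f ≫ b = a ≫ f) (n : ℕ) :
    f ≫ (b ^ n : End E) = (a ^ n : End C) ≫ f := by
  induction n with
  | zero => 
    rw [pow_zero, pow_zero]
    exact (Category.comp_id f).trans (Category.id_comp f).symm
  | succ n ih =>
    rw [pow_succ, pow_succ]
    change f ≫ ((b : E ⟶ E) ≫ (b ^ n : End E)) = ((a : C ⟶ C) ≫ (a ^ n : End C)) ≫ f
    rw [← Category.assoc, h, Category.assoc, ih, Category.assoc]

lemma inter_geom {C E : Cx} (f : C ⟶ E) (a : End C) (b : End E) (h : f ≫ b = a ≫ f) (n : ℕ) :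
    f ≫ (∑ k ∈ Finset.range n, b ^ k : End E) = (∑ k ∈ Finset.range n, a ^ k : End C) ≫ f := by
  rw [Preadditive.comp_sum, Preadditive.sum_comp]
  exact Finset.sum_congr rfl fun k _ => inter_pow f a b h k

lemma inter_sub {C E : Cx} (f : C ⟶ E) (a : End C) (b : End E) (h : f ≫ b = a ≫ f) :
    f ≫ (b - 1 : End E) = (a - 1 : End C) ≫ f := by
  have e : f ≫ (1 : End E) = (1 : End C) ≫ f :=
    (Category.comp_id f).trans (Category.id_comp f).symm
  rw [Preadditive.comp_sub, Preadditive.sub_comp, h, e]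

lemma kerExact {C : Cx} (φ : C ⟶ C) (i : ℤ) :
    (ShortComplex.mk ((kernel.ι φ).f i) (φ.f i)
      (by rw [← HomologicalComplex.comp_f, kernel.condition, HomologicalComplex.zero_f])).Exact := by
  have := (HomologicalComplex.exact_iff_degreewise_exact
    (ShortComplex.mk (kernel.ι φ) φ (kernel.condition φ))).1 
    (ShortComplex.exact_of_f_is_kernel _ (kernelIsKernel φ)) i
  exact this

lemma cokExact {B C : Cx} (m : B ⟶ C) (i : ℤ) :
    (ShortComplex.mk (m.f i) ((cokernel.π m).f i)
      (by rw [← HomologicalComplex.comp_f, cokernel.condition, HomologicalComplex.zero_f])).Exact := by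
  have := (HomologicalComplex.exact_iff_degreewise_exact
    (ShortComplex.mk m (cokernel.π m) (cokernel.condition m))).1 
    (ShortComplex.exact_of_g_is_cokernel _ (cokernelIsCokernel m)) i
  exact this

lemma kerLift {C : Cx} (φ : C ⟶ C) {i j : ℤ} (h : C.X i ⟶ C.X j) (hh : Cm h φ) :
    ∃ h' : (kernel φ).X i ⟶ (kernel φ).X j, h' ≫ (kernel.ι φ).f j = (kernel.ι φ).f i ≫ h := by
  have : Mono (ShortComplex.mk ((kernel.ι φ).f j) (φ.f j)
      (by rw [← HomologicalComplex.comp_f, kernel.condition, HomologicalComplex.zero_f])).f := by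
    dsimp; infer_instance
  have hz : ((kernel.ι φ).f i ≫ h) ≫ φ.f j = 0 := by
    rw [Category.assoc, ← hh, ← Category.assoc, ← HomologicalComplex.comp_f, kernel.condition,
      HomologicalComplex.zero_f, zero_comp]
  exact ⟨(kerExact φ j).lift _ hz, (kerExact φ j).lift_f _ hz⟩

lemma kerHomotopy {C : Cx} (φ : C ⟶ C) (u : C ⟶ C) (h : Homotopy u (𝟙 C))
    (hh : ∀ i j, Cm (h.hom i j) φ) (k : kernel φ ⟶ kernel φ)
    (hk : k ≫ kernel.ι φ = kernel.ι φ ≫ u) : Nonempty (Homotopy k (𝟙 _)) := by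
  choose h' hh' using fun i j => kerLift φ (h.hom i j) (hh i j)
  exact ⟨subHomotopy (kernel.ι φ) k u hk h h' hh'⟩

lemma kerEquiv {C E : Cx} (φ : C ⟶ C) (ψ : E ⟶ E) (f : C ⟶ E) (g : E ⟶ C)
    (hf : f ≫ ψ = φ ≫ f) (hg : g ≫ φ = ψ ≫ g)
    (h₁ : Homotopy (f ≫ g) (𝟙 C)) (h₂ : Homotopy (g ≫ f) (𝟙 E))
    (c₁ : ∀ i j, Cm (h₁.hom i j) φ) (c₂ : ∀ i j, Cm (h₂.hom i j) ψ) :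
    Nonempty (HomotopyEquiv (kernel φ) (kernel ψ)) := by
  let F : kernel φ ⟶ kernel ψ := kernel.map φ ψ f f hf.symm
  let G : kernel ψ ⟶ kernel φ := kernel.map ψ φ g g hg.symm
  obtain ⟨a⟩ := kerHomotopy φ _ h₁ c₁ (F ≫ G) (by simp [F, G])
  obtain ⟨b⟩ := kerHomotopy ψ _ h₂ c₂ (G ≫ F) (by simp [F, G])
  exact ⟨⟨F, G, a, b⟩⟩

/-- the map of which we take the cokernel -/
noncomputable abbrev qm {C : Cx} (φ φ' : C ⟶ C) := biprod.desc (kernel.ι φ) (kernel.ι φ')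

lemma cokHomotopyAux {C B : Cx} (φ φ' : C ⟶ C) (u : C ⟶ C) (h : Homotopy u (𝟙 C))
    (hh : ∀ i j, Cm (h.hom i j) φ) (hh' : ∀ i j, Cm (h.hom i j) φ') (m : B ⟶ C)
    (s : B ⟶ kernel φ) (t : B ⟶ kernel φ') (hm : m = s ≫ kernel.ι φ + t ≫ kernel.ι φ')
    (z1 : kernel.ι φ ≫ cokernel.π m = 0) (z2 : kernel.ι φ' ≫ cokernel.π m = 0)
    (k : cokernel m ⟶ cokernel m)
    (hk : cokernel.π m ≫ k = u ≫ cokernel.π m) : Nonempty (Homotopy k (𝟙 _)) := by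
  have key : ∀ i j, ∃ h' : (cokernel m).X i ⟶ (cokernel m).X j,
      (cokernel.π m).f i ≫ h' = h.hom i j ≫ (cokernel.π m).f j := by
    intro i j
    have : Epi (ShortComplex.mk (m.f i) ((cokernel.π m).f i)
      (by rw [← HomologicalComplex.comp_f, cokernel.condition, HomologicalComplex.zero_f])).g := by
      dsimp; infer_instance
    obtain ⟨k1, e1⟩ := kerLift φ (h.hom i j) (hh i j)
    obtain ⟨k2, e2⟩ := kerLift φ' (h.hom i j) (hh' i j)
    have w1 : (kernel.ι φ).f i ≫ h.hom i j ≫ (cokernel.π m).f j = 0 := by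
      rw [← Category.assoc, ← e1, Category.assoc, ← HomologicalComplex.comp_f, z1,
        HomologicalComplex.zero_f, comp_zero]
    have w2 : (kernel.ι φ').f i ≫ h.hom i j ≫ (cokernel.π m).f j = 0 := by
      rw [← Category.assoc, ← e2, Category.assoc, ← HomologicalComplex.comp_f, z2,
        HomologicalComplex.zero_f, comp_zero]
    have hmi : m.f i = s.f i ≫ (kernel.ι φ).f i + t.f i ≫ (kernel.ι φ').f i := by
      rw [← HomologicalComplex.comp_f, ← HomologicalComplex.comp_f,
        ← HomologicalComplex.add_f_apply, ← hm]
    have hz : m.f i ≫ (h.hom i j ≫ (cokernel.π m).f j) = 0 := by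
      rw [hmi, Preadditive.add_comp, Category.assoc, Category.assoc, w1, w2]
      simp
    exact ⟨(cokExact m i).desc _ hz, (cokExact m i).g_desc _ hz⟩
  choose h' hh' using key
  exact ⟨quotHomotopy (cokernel.π m) k u hk h h' hh'⟩

lemma qz1 {C : Cx} (φ φ' : C ⟶ C) : kernel.ι φ ≫ cokernel.π (qm φ φ') = 0 := by
  have : kernel.ι φ = biprod.inl ≫ qm φ φ' := (biprod.inl_desc _ _).symm
  rw [this, Category.assoc, cokernel.condition, comp_zero]

lemma qz2 {C : Cx} (φ φ' : C ⟶ C) : kernel.ι φ' ≫ cokernel.π (qm φ φ') = 0 := by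
  have : kernel.ι φ' = biprod.inr ≫ qm φ φ' := (biprod.inr_desc _ _).symm
  rw [this, Category.assoc, cokernel.condition, comp_zero]

lemma cokHomotopy {C : Cx} (φ φ' : C ⟶ C) (u : C ⟶ C) (h : Homotopy u (𝟙 C))
    (hh : ∀ i j, Cm (h.hom i j) φ) (hh' : ∀ i j, Cm (h.hom i j) φ')
    (k : cokernel (qm φ φ') ⟶ cokernel (qm φ φ'))
    (hk : cokernel.π (qm φ φ') ≫ k = u ≫ cokernel.π (qm φ φ')) : Nonempty (Homotopy k (𝟙 _)) :=
  cokHomotopyAux φ φ' u h hh hh' (qm φ φ') biprod.fst biprod.snd biprod.desc_eq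
    (qz1 φ φ') (qz2 φ φ') k hk

lemma cokEquiv {C E : Cx} (φ φ' : C ⟶ C) (ψ ψ' : E ⟶ E) (f : C ⟶ E) (g : E ⟶ C)
    (hf : f ≫ ψ = φ ≫ f) (hg : g ≫ φ = ψ ≫ g)
    (hf' : f ≫ ψ' = φ' ≫ f) (hg' : g ≫ φ' = ψ' ≫ g)
    (h₁ : Homotopy (f ≫ g) (𝟙 C)) (h₂ : Homotopy (g ≫ f) (𝟙 E))
    (c₁ : ∀ i j, Cm (h₁.hom i j) φ) (c₂ : ∀ i j, Cm (h₂.hom i j) ψ)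
    (c₁' : ∀ i j, Cm (h₁.hom i j) φ') (c₂' : ∀ i j, Cm (h₂.hom i j) ψ') :
    Nonempty (HomotopyEquiv (cokernel (qm φ φ')) (cokernel (qm ψ ψ'))) := by
  let F : cokernel (qm φ φ') ⟶ cokernel (qm ψ ψ') := cokernel.map _ _
    (biprod.map (kernel.map φ ψ f f hf.symm) (kernel.map φ' ψ' f f hf'.symm)) f
    (by apply biprod.hom_ext' <;> simp [qm])
  let G : cokernel (qm ψ ψ') ⟶ cokernel (qm φ φ') := cokernel.map _ _
    (biprod.map (kernel.map ψ φ g g hg.symm) (kernel.map ψ' φ' g g hg'.symm)) g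
    (by apply biprod.hom_ext' <;> simp [qm])
  obtain ⟨a⟩ := cokHomotopy φ φ' _ h₁ c₁ c₁' (F ≫ G) (by simp [F, G])
  obtain ⟨b⟩ := cokHomotopy ψ ψ' _ h₂ c₂ c₂' (G ≫ F) (by simp [F, G])
  exact ⟨⟨F, G, a, b⟩⟩

lemma Hcard_eq {X Y : Cx} (h : Nonempty (HomotopyEquiv X Y)) (i : ℤ) : Hcard i X = Hcard i Y := by
  obtain ⟨e⟩ := h
  exact Nat.card_congr (e.toHomologyIso i).toLinearEquiv.toEquiv


lemma pure_torsion {R : Type} (K : Type) [CommRing R] [IsDomain R] [Field K] [Algebra R K]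
    [IsFractionRing R K] {M N : Type} [AddCommGroup M] [AddCommGroup N] [Module R M] [Module R N]
    [Module.Flat R N] (d : M →ₗ[R] N) (y : N) (t : TensorProduct R M K)
    (ht : d.rTensor K t = y ⊗ₜ[R] (1 : K)) : ∃ n : R, n ≠ 0 ∧ ∃ w : M, n • y = d w := by
  have cl : ∀ t : TensorProduct R M K, ∃ n : R, n ≠ 0 ∧ ∃ w : M,
      n • t = w ⊗ₜ[R] (1 : K) := by
    intro t
    induction t with
    | zero => exact ⟨1, one_ne_zero, 0, by simp⟩
    | tmul m q =>
      obtain ⟨a, b, hb, rfl⟩ := IsFractionRing.div_surjective (A := R) q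
      have hb0 : b ≠ 0 := nonZeroDivisors.ne_zero hb
      have hb1 : algebraMap R K b ≠ 0 := by simpa using hb0
      refine ⟨b, hb0, a • m, ?_⟩
      rw [← TensorProduct.tmul_smul, TensorProduct.smul_tmul]
      congr 1
      rw [Algebra.smul_def, Algebra.smul_def]
      field_simp
    | add a b ha hb =>
      obtain ⟨n, hn, w, hw⟩ := ha
      obtain ⟨n', hn', w', hw'⟩ := hb
      refine ⟨n * n', mul_ne_zero hn hn', n' • w + n • w', ?_⟩
      rw [smul_add, TensorProduct.add_tmul, mul_smul, mul_smul, hw', smul_comm, hw]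
      rfl
  obtain ⟨n, hn, w, hw⟩ := cl t
  refine ⟨n, hn, w, ?_⟩
  have e1 : ((n • y) ⊗ₜ[R] (1 : K) : TensorProduct R N K) = (d w) ⊗ₜ[R] (1 : K) := by
    rw [← LinearMap.rTensor_tmul, ← hw, map_smul, ht]; rfl
  have hi := Module.Flat.lTensor_preserves_injective_linearMap (M := N)
    (Algebra.linearMap R K) (IsFractionRing.injective R K)
  have := @hi ((n • y) ⊗ₜ 1) ((d w) ⊗ₜ 1) (by simpa using e1)
  exact (TensorProduct.rid R N).symm.injective this

lemma hom_torsion (C : Cx) (i : ℤ) (hfree : Module.Free ℤ (C.X i))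
    (hac : IsZero ((HomologicalComplex.homologyFunctor (ModuleCat ℤ) (ComplexShape.up ℤ) i).obj
        (tensorQ C))) (x : C.homology i) : ∃ n : ℤ, n ≠ 0 ∧ n • x = 0 := by
  have hsurj : Function.Surjective (C.homologyπ i) :=
    (ModuleCat.epi_iff_surjective _).1 inferInstance
  obtain ⟨z, rfl⟩ := hsurj x
  have hinj : Function.Injective (C.iCycles i) :=
    (ModuleCat.mono_iff_injective _).1 inferInstance
  have hx : (tensorQ C).ExactAt i := (HomologicalComplex.exactAt_iff_isZero_homology _ _).2 hac
  rw [HomologicalComplex.exactAt_iff' _ (i - 1) i (i + 1) (by simp) (by simp),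
    ShortComplex.moduleCat_exact_iff] at hx
  set y : C.X i := C.iCycles i z with hy
  have hdy : C.d i (i + 1) y = 0 := by
    rw [hy, ← ModuleCat.comp_apply, HomologicalComplex.iCycles_d]; rfl
  have dap : ∀ (a b : ℤ) (m : C.X a) (q : ℚ),
      (tensorQ C).d a b (m ⊗ₜ[ℤ] q : TensorProduct ℤ (C.X a) ℚ)
        = ((C.d a b m) ⊗ₜ[ℤ] q : TensorProduct ℤ (C.X b) ℚ) := fun a b m q => rfl
  obtain ⟨t, ht⟩ := hx (y ⊗ₜ[ℤ] (1 : ℚ) : TensorProduct ℤ (C.X i) ℚ) (by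
    refine (dap i (i + 1) y 1).trans ?_
    rw [hdy, TensorProduct.zero_tmul]
    rfl)
  obtain ⟨n, hn, w, e2'⟩ := pure_torsion ℚ (C.d (i - 1) i).hom y t ht
  have e2 : n • y = C.d (i - 1) i w := (int_smul_eq_zsmul _ n y).symm.trans e2'
  refine ⟨n, hn, ?_⟩
  have e3 : n • z = C.toCycles (i - 1) i w := by
    apply hinj
    rw [map_zsmul, ← hy, e2, ← ModuleCat.comp_apply, HomologicalComplex.toCycles_i]
  rw [← map_zsmul, e3, ← ModuleCat.comp_apply, HomologicalComplex.toCycles_comp_homologyπ]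
  rfl

lemma hom_finite (C X : Cx) (i : ℤ) (hfree : Module.Free ℤ (C.X i))
    (hac : IsZero ((HomologicalComplex.homologyFunctor (ModuleCat ℤ) (ComplexShape.up ℤ) i).obj
        (tensorQ C))) (hX : Module.Finite ℤ (X.X i)) (a : X ⟶ C) (b : C ⟶ X) (p : ℕ) (hp : p ≠ 0)
    (hab : a ≫ b = p • 𝟙 X) :
    Finite ((HomologicalComplex.homologyFunctor (ModuleCat ℤ) (ComplexShape.up ℤ) i).obj X) := by
  change Finite (X.homology i)
  have hsurj : Function.Surjective (X.homologyπ i) :=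
    (ModuleCat.epi_iff_surjective _).1 inferInstance
  have hinj : Function.Injective (X.iCycles i) :=
    (ModuleCat.mono_iff_injective _).1 inferInstance
  have f1 : Module.Finite ℤ (X.cycles i) := Module.Finite.of_injective (X.iCycles i).hom hinj
  have f2 : Module.Finite ℤ (X.homology i) := Module.Finite.of_surjective (X.homologyπ i).hom hsurj
  apply Module.finite_of_fg_torsion
  intro x
  obtain ⟨n, hn, h⟩ := hom_torsion C i hfree hac (HomologicalComplex.homologyMap a i x)
  have e : HomologicalComplex.homologyMap b i (HomologicalComplex.homologyMap a i x) = (p : ℤ) • x := by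
    rw [← ModuleCat.comp_apply, ← HomologicalComplex.homologyMap_comp, hab]
    have : HomologicalComplex.homologyMap (p • 𝟙 X) i = p • 𝟙 (X.homology i) := by
      rw [← HomologicalComplex.homologyMap_id]
      exact (HomologicalComplex.homologyFunctor (ModuleCat.{0} ℤ) (ComplexShape.up ℤ) i).map_nsmul
    rw [this]
    simp
  refine ⟨⟨n * p, mem_nonZeroDivisors_of_ne_zero (mul_ne_zero hn (by exact_mod_cast hp))⟩, ?_⟩
  refine (int_smul_eq_zsmul _ (n * (p : ℤ)) x).trans ?_
  rw [mul_comm, mul_zsmul', ← e, ← map_zsmul, h, map_zero]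

lemma ring_id {R : Type*} [Ring R] (p : ℕ) (s : R) (h : s ^ p = 1) :
    (s - 1) * (∑ k ∈ Finset.range p, s ^ k) = 0 ∧
    (∑ k ∈ Finset.range p, s ^ k) * ((p : R) - ∑ k ∈ Finset.range p, s ^ k) = 0 ∧
    ∃ T, (∑ k ∈ Finset.range p, s ^ k) = p + T * (s - 1) := by
  have h1 : (s - 1) * (∑ k ∈ Finset.range p, s ^ k) = 0 := by rw [mul_geom_sum, h, sub_self]
  have h2 : (∑ k ∈ Finset.range p, s ^ k) * (s - 1) = 0 := by rw [geom_sum_mul, h, sub_self]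
  refine ⟨h1, ?_, ∑ k ∈ Finset.range p, ∑ j ∈ Finset.range k, s ^ j, ?_⟩
  · have : (p : R) - ∑ k ∈ Finset.range p, s ^ k
        = - ((s - 1) * ∑ k ∈ Finset.range p, ∑ j ∈ Finset.range k, s ^ j) := by
      rw [Finset.mul_sum]
      simp [mul_geom_sum]
    rw [this, mul_neg, ← mul_assoc, h2, zero_mul, neg_zero]
  · rw [Finset.sum_mul]
    simp [geom_sum_mul]

lemma all_finite (p : ℕ) (hp : p ≠ 0) (C : Cx) (i : ℤ) (hfree : Module.Free ℤ (C.X i))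
    (hfg : Module.Finite ℤ (C.X i))
    (hac : IsZero ((HomologicalComplex.homologyFunctor (ModuleCat ℤ) (ComplexShape.up ℤ) i).obj
        (tensorQ C))) (σ : End C) (hσ : σ ^ p = 1) :
      Finite ((HomologicalComplex.homologyFunctor (ModuleCat ℤ) (ComplexShape.up ℤ) i).obj
        (fixCx C σ)) ∧
      Finite ((HomologicalComplex.homologyFunctor (ModuleCat ℤ) (ComplexShape.up ℤ) i).obj
        (cycCx p C σ)) ∧
      Finite ((HomologicalComplex.homologyFunctor (ModuleCat ℤ) (ComplexShape.up ℤ) i).obj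
        (quotCx p C σ)) := by
  obtain ⟨r1, r2, T, r3⟩ := ring_id p σ hσ
  have kf : ∀ φ : C ⟶ C, Module.Finite ℤ ((kernel φ).X i) := fun φ =>
    Module.Finite.of_injective ((kernel.ι φ).f i).hom
      ((ModuleCat.mono_iff_injective _).1 inferInstance)
  have qf : ∀ {B : Cx} (m : B ⟶ C), Module.Finite ℤ ((cokernel m).X i) := fun m =>
    Module.Finite.of_surjective ((cokernel.π m).f i).hom
      ((ModuleCat.epi_iff_surjective _).1 inferInstance)
  unfold fixCx cycCx quotCx
  have pc : ((p : End C) : C ⟶ C) = p • 𝟙 C := by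
    rw [← nsmul_one]; rfl
  let φ : C ⟶ C := (σ - 1 : End C)
  let ψ : C ⟶ C := (∑ k ∈ Finset.range p, σ ^ k : End C)
  let T' : C ⟶ C := T
  have s1 : ψ ≫ φ = 0 := r1
  have s2 : (p • 𝟙 C - ψ) ≫ ψ = 0 := by rw [← pc]; exact r2
  have s3 : ψ = p • 𝟙 C + φ ≫ T' := by rw [← pc]; exact r3
  refine ⟨hom_finite C _ i hfree hac (kf φ) (kernel.ι φ) (kernel.lift φ ψ s1) p hp ?_,
    hom_finite C _ i hfree hac (kf ψ) (kernel.ι ψ) (kernel.lift ψ _ s2) p hp ?_,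
    hom_finite C _ i hfree hac (qf (qm φ ψ)) 0 0 p hp ?_⟩
  · rw [← cancel_mono (kernel.ι φ), Category.assoc, kernel.lift_ι, s3, Preadditive.comp_add,
      kernel.condition_assoc]
    simp
  · rw [← cancel_mono (kernel.ι ψ), Category.assoc, kernel.lift_ι, Preadditive.comp_sub,
      kernel.condition]
    simp
  · rw [← cancel_epi (cokernel.π (qm φ ψ))]
    have a1 : ψ ≫ cokernel.π (qm φ ψ) = 0 := by
      have := congrArg (kernel.lift φ ψ s1 ≫ ·) (qz1 φ ψ)
      simpa only [kernel.lift_ι_assoc, comp_zero] using this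
    have a2 : (p • 𝟙 C - ψ) ≫ cokernel.π (qm φ ψ) = 0 := by
      have := congrArg (kernel.lift ψ _ s2 ≫ ·) (qz2 φ ψ)
      simpa only [kernel.lift_ι_assoc, comp_zero] using this
    rw [Preadditive.sub_comp, a1, sub_zero, Preadditive.nsmul_comp, Category.id_comp] at a2
    rw [zero_comp, comp_zero, Preadditive.comp_nsmul, Category.comp_id, a2]

end helpers

/-- Let p be a prime and C, E bounded, rationally acyclic cochain complexes of
finitely generated free abelian groups with chain automorphisms σ satisfying σ^p = id, and
suppose there are σ-commuting chain maps f : C → E, g : E → C mutually inverse up to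
σ-commuting chain homotopies.  Then the naive equivariant Reidemeister torsions agree:
Σ_i (−1)^i [(p−1)log|H^i(C^{σ−1})| − log|H^i(C^{P(σ)})| + (p−1)log|H^i(C')|]
  = Σ_i (−1)^i [(p−1)log|H^i(E^{σ−1})| − log|H^i(E^{P(σ)})| + (p−1)log|H^i(E')|],
where all the cohomology groups appearing are finite. -/
theorem stmt_7 (p : ℕ) (hp : p.Prime)
    (C E : CochainComplex (ModuleCat ℤ) ℤ)
    (hCbd : ∃ N : ℕ, ∀ i : ℤ, (N : ℤ) ≤ |i| → IsZero (C.X i))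
    (hEbd : ∃ N : ℕ, ∀ i : ℤ, (N : ℤ) ≤ |i| → IsZero (E.X i))
    (hCfree : ∀ i : ℤ, Module.Free ℤ (C.X i)) (hCfg : ∀ i : ℤ, Module.Finite ℤ (C.X i))
    (hEfree : ∀ i : ℤ, Module.Free ℤ (E.X i)) (hEfg : ∀ i : ℤ, Module.Finite ℤ (E.X i))
    (hCacyc : ∀ i : ℤ, IsZero
      ((HomologicalComplex.homologyFunctor (ModuleCat ℤ) (ComplexShape.up ℤ) i).obj
        (tensorQ C)))
    (hEacyc : ∀ i : ℤ, IsZero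
      ((HomologicalComplex.homologyFunctor (ModuleCat ℤ) (ComplexShape.up ℤ) i).obj
        (tensorQ E)))
    (σC : End C) (σE : End E) (hσC : σC ^ p = 1) (hσE : σE ^ p = 1)
    (f : C ⟶ E) (g : E ⟶ C)
    (hfσ : f ≫ σE = σC ≫ f) (hgσ : g ≫ σC = σE ≫ g)
    (hgf : ∃ h : Homotopy (f ≫ g) (𝟙 C),
      ∀ i j : ℤ, (σC : C ⟶ C).f i ≫ h.hom i j = h.hom i j ≫ (σC : C ⟶ C).f j)
    (hfg : ∃ h : Homotopy (g ≫ f) (𝟙 E),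
      ∀ i j : ℤ, (σE : E ⟶ E).f i ≫ h.hom i j = h.hom i j ≫ (σE : E ⟶ E).f j) :
    (∀ i : ℤ,
      Finite ((HomologicalComplex.homologyFunctor (ModuleCat ℤ) (ComplexShape.up ℤ) i).obj
        (fixCx C σC)) ∧
      Finite ((HomologicalComplex.homologyFunctor (ModuleCat ℤ) (ComplexShape.up ℤ) i).obj
        (cycCx p C σC)) ∧
      Finite ((HomologicalComplex.homologyFunctor (ModuleCat ℤ) (ComplexShape.up ℤ) i).obj
        (quotCx p C σC)) ∧
      Finite ((HomologicalComplex.homologyFunctor (ModuleCat ℤ) (ComplexShape.up ℤ) i).obj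
        (fixCx E σE)) ∧
      Finite ((HomologicalComplex.homologyFunctor (ModuleCat ℤ) (ComplexShape.up ℤ) i).obj
        (cycCx p E σE)) ∧
      Finite ((HomologicalComplex.homologyFunctor (ModuleCat ℤ) (ComplexShape.up ℤ) i).obj
        (quotCx p E σE))) ∧
    nrt p C σC = nrt p E σE := by
  obtain ⟨h₁, c₁⟩ := hgf
  obtain ⟨h₂, c₂⟩ := hfg
  refine ⟨fun i => ?_, ?_⟩
  · obtain ⟨a1, a2, a3⟩ := all_finite p hp.ne_zero C i (hCfree i) (hCfg i) (hCacyc i) σC hσC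
    obtain ⟨b1, b2, b3⟩ := all_finite p hp.ne_zero E i (hEfree i) (hEfg i) (hEacyc i) σE hσE
    exact ⟨a1, a2, a3, b1, b2, b3⟩
  · have d₁ : ∀ i j, Cm (h₁.hom i j) (σC - 1 : End C) := fun i j => Cm.sub (c₁ i j) (Cm.one _)
    have d₂ : ∀ i j, Cm (h₂.hom i j) (σE - 1 : End E) := fun i j => Cm.sub (c₂ i j) (Cm.one _)
    have e₁ : ∀ i j, Cm (h₁.hom i j) (∑ k ∈ Finset.range p, σC ^ k : End C) :=
      fun i j => Cm.geom (c₁ i j) p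
    have e₂ : ∀ i j, Cm (h₂.hom i j) (∑ k ∈ Finset.range p, σE ^ k : End E) :=
      fun i j => Cm.geom (c₂ i j) p
    have A : ∀ i, Hcard i (fixCx C σC) = Hcard i (fixCx E σE) := Hcard_eq
      (kerEquiv _ _ f g (inter_sub f σC σE hfσ) (inter_sub g σE σC hgσ) h₁ h₂ d₁ d₂)
    have B : ∀ i, Hcard i (cycCx p C σC) = Hcard i (cycCx p E σE) := Hcard_eq
      (kerEquiv _ _ f g (inter_geom f σC σE hfσ p) (inter_geom g σE σC hgσ p) h₁ h₂ e₁ e₂)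
    have D : ∀ i, Hcard i (quotCx p C σC) = Hcard i (quotCx p E σE) := Hcard_eq
      (cokEquiv _ _ _ _ f g (inter_sub f σC σE hfσ) (inter_sub g σE σC hgσ)
        (inter_geom f σC σE hfσ p) (inter_geom g σE σC hgσ p) h₁ h₂ d₁ d₂ e₁ e₂)
    unfold nrt
    simp only [A, B, D]
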